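/- Let p ≥ 7 be an odd integer and let u be twice differentiable on (0,1) and satisfy the self-similar profile equation (1−ρ²)u''(ρ) + (2/ρ − (2+2α)ρ)u'(ρ) − α(α+1)u(ρ) + u(ρ)^p = 0 for all ρ ∈ (0,1). Set v(ρ) = u(ρ)/(b∞ ρ^{−α}) and H_v(ρ) = (1/2)ρ²(1−ρ²)v'(ρ)² − α(1−α)(v(ρ)²/2 − v(ρ)^{p+1}/(p+1)). Then H_v'(ρ) = ((5−p)/(p−1))·ρ·v'(ρ)² ≤ 0 for all ρ ∈ (0,1), so H_v is nonincreasing on (0,1); moreover H_v(ρ) ≥ −(p−3)/(p²−1) for all ρ ∈ (0,1). -/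

import Mathlib

open Set Real Filter

/-- The exponent `α = 2/(p-1)`. -/
noncomputable def alphaP (p : ℕ) : ℝ := 2 / ((p : ℝ) - 1)

/-- `b₀ = (2(p+1)/(p-1)²)^(1/(p-1))`, the constant solution. -/
noncomputable def bZero (p : ℕ) : ℝ :=
  (2 * ((p : ℝ) + 1) / ((p : ℝ) - 1) ^ 2) ^ ((1 : ℝ) / ((p : ℝ) - 1))

/-- `b∞ = (2(p-3)/(p-1)²)^(1/(p-1))`. -/
noncomputable def bInfty (p : ℕ) : ℝ :=
  (2 * ((p : ℝ) - 3) / ((p : ℝ) - 1) ^ 2) ^ ((1 : ℝ) / ((p : ℝ) - 1))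

/-- The singular static solution `u∞(ρ) = b∞ ρ^(-α)`. -/
noncomputable def uInfty (p : ℕ) (ρ : ℝ) : ℝ := bInfty p * ρ ^ (-(alphaP p))

/-- The self-similar profile equation
`(1-ρ²)u'' + (2/ρ - (2+2α)ρ)u' - α(α+1)u + u^p = 0` at the point `ρ`. -/
def ProfileEq (p : ℕ) (u : ℝ → ℝ) (ρ : ℝ) : Prop :=
  (1 - ρ ^ 2) * deriv (deriv u) ρ + (2 / ρ - (2 + 2 * alphaP p) * ρ) * deriv u ρ
    - alphaP p * (alphaP p + 1) * u ρ + u ρ ^ p = 0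

/-- The Lyapunov function `H_v` for `v = u/u∞`. -/
noncomputable def lyapunovHv (p : ℕ) (u : ℝ → ℝ) (ρ : ℝ) : ℝ :=
  (1 / 2) * ρ ^ 2 * (1 - ρ ^ 2) * (deriv (fun s => u s / uInfty p s) ρ) ^ 2
    - alphaP p * (1 - alphaP p) *
      ((u ρ / uInfty p ρ) ^ 2 / 2 - (u ρ / uInfty p ρ) ^ (p + 1) / ((p : ℝ) + 1))

lemma aux_alpha (p : ℕ) (hp : 7 ≤ p) :
    2 * ((p : ℝ) - 3) / ((p : ℝ) - 1) ^ 2 = alphaP p * (1 - alphaP p) := by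
  have h7 : (7 : ℝ) ≤ p := by exact_mod_cast hp
  have h1 : (p : ℝ) - 1 ≠ 0 := by linarith
  unfold alphaP
  field_simp
  ring

lemma aux_b_pos (p : ℕ) (hp : 7 ≤ p) : 0 < bInfty p := by
  have h7 : (7 : ℝ) ≤ p := by exact_mod_cast hp
  unfold bInfty
  apply Real.rpow_pos_of_pos
  apply div_pos
  · linarith
  · have : 0 < (p : ℝ) - 1 := by linarith
    positivity

lemma aux_b_pow (p : ℕ) (hp : 7 ≤ p) :
    bInfty p ^ (p - 1) = alphaP p * (1 - alphaP p) := by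
  have h7 : (7 : ℝ) ≤ p := by exact_mod_cast hp
  rw [← aux_alpha p hp]
  unfold bInfty
  have h1 : (p : ℝ) - 1 = ((p - 1 : ℕ) : ℝ) := by
    rw [Nat.cast_sub (by omega)]; simp
  have h0 : 0 ≤ 2 * ((p : ℝ) - 3) / ((p : ℝ) - 1) ^ 2 := by
    apply div_nonneg
    · linarith
    · positivity
  have h2 : (1 : ℝ) / ((p : ℝ) - 1) = (((p - 1 : ℕ) : ℝ))⁻¹ := by rw [h1, one_div]
  rw [h2]
  exact Real.rpow_inv_natCast_pow h0 (by omega)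

noncomputable def auxG (p : ℕ) (s : ℝ) : ℝ := (bInfty p)⁻¹ * s ^ (alphaP p)

lemma auxG_div (p : ℕ) (u : ℝ → ℝ) {s : ℝ} (hs : 0 < s) :
    u s / uInfty p s = auxG p s * u s := by
  unfold uInfty auxG
  rw [Real.rpow_neg hs.le, div_eq_mul_inv, mul_inv, inv_inv]
  ring

lemma auxG_pow (p : ℕ) (hp : 7 ≤ p) {s : ℝ} (hs : 0 < s) :
    alphaP p * (1 - alphaP p) * auxG p s ^ p = s ^ 2 * auxG p s := by
  have h7 : (7 : ℝ) ≤ p := by exact_mod_cast hp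
  have hb := aux_b_pos p hp
  have h1 : (s ^ (alphaP p)) ^ (p - 1) = s ^ 2 := by
    rw [← Real.rpow_natCast, ← Real.rpow_mul hs.le, Nat.cast_sub (by omega)]
    have h2 : alphaP p * ((p : ℝ) - ((1 : ℕ) : ℝ)) = ((2 : ℕ) : ℝ) := by
      unfold alphaP
      have h1 : (p : ℝ) - 1 ≠ 0 := by linarith
      push_cast
      field_simp
    rw [h2, Real.rpow_natCast]
  have h3 : auxG p s ^ p = auxG p s ^ (p - 1) * auxG p s := by
    rw [← pow_succ]; congr 1; omega
  rw [h3, ← aux_b_pow p hp]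
  have h4 : bInfty p ^ (p - 1) * auxG p s ^ (p - 1) = s ^ 2 := by
    rw [← mul_pow]
    unfold auxG
    rw [← mul_assoc, mul_inv_cancel₀ hb.ne', one_mul, h1]
  rw [← mul_assoc, h4]

lemma auxG_deriv (p : ℕ) {s : ℝ} (hs : 0 < s) :
    HasDerivAt (auxG p) (alphaP p * auxG p s / s) s := by
  have h := (Real.hasDerivAt_rpow_const (x := s) (p := alphaP p) (Or.inl hs.ne')).const_mul
    (bInfty p)⁻¹
  refine HasDerivAt.congr_deriv (f := auxG p) h ?_
  unfold auxG
  rw [Real.rpow_sub_one hs.ne']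
  ring

lemma aux_v (p : ℕ) (u : ℝ → ℝ) {s : ℝ} (hs : 0 < s) (hd : DifferentiableAt ℝ u s) :
    HasDerivAt (fun s => u s / uInfty p s)
      (auxG p s * (deriv u s + alphaP p * u s / s)) s := by
  have h := (auxG_deriv p hs).mul hd.hasDerivAt
  have h2 : (fun s => u s / uInfty p s) =ᶠ[nhds s] (auxG p * u) := by
    filter_upwards [Ioi_mem_nhds hs] with x hx
    exact auxG_div p u hx
  refine HasDerivAt.congr_of_eventuallyEq ?_ h2
  refine HasDerivAt.congr_deriv h ?_
  ring

lemma aux_H (p : ℕ) (hp : 7 ≤ p) (u : ℝ → ℝ)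
    (hdiff : ∀ ρ ∈ Ioo (0 : ℝ) 1, DifferentiableAt ℝ u ρ)
    (hdiff2 : ∀ ρ ∈ Ioo (0 : ℝ) 1, DifferentiableAt ℝ (deriv u) ρ)
    (heq : ∀ ρ ∈ Ioo (0 : ℝ) 1, ProfileEq p u ρ) (ρ : ℝ) (hρ : ρ ∈ Ioo (0 : ℝ) 1) :
    HasDerivAt (lyapunovHv p u)
      (((5 - (p : ℝ)) / ((p : ℝ) - 1)) * ρ * (deriv (fun s => u s / uInfty p s) ρ) ^ 2) ρ := by
  have h7 : (7 : ℝ) ≤ p := by exact_mod_cast hp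
  have hp1 : (p : ℝ) - 1 ≠ 0 := by linarith
  have hp2 : (p : ℝ) + 1 ≠ 0 := by linarith
  have h0 := hρ.1
  have hne := h0.ne'
  have hv := aux_v p u h0 (hdiff ρ hρ)
  have hF : HasDerivAt (deriv (fun s => u s / uInfty p s))
      (alphaP p * auxG p ρ / ρ * (deriv u ρ + alphaP p * u ρ / ρ) + auxG p ρ *
        (deriv (deriv u) ρ + (alphaP p * deriv u ρ * ρ - alphaP p * u ρ * 1) / ρ ^ 2)) ρ := by
    have h1 := (auxG_deriv p h0).mul ((hdiff2 ρ hρ).hasDerivAt.add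
      (((hdiff ρ hρ).hasDerivAt.const_mul (alphaP p)).div (hasDerivAt_id ρ) hne))
    refine HasDerivAt.congr_of_eventuallyEq h1 ?_
    filter_upwards [Ioo_mem_nhds hρ.1 hρ.2] with x hx
    exact (aux_v p u hx.1 (hdiff x hx)).deriv
  have hid := hasDerivAt_id ρ
  have hH := ((((hid.pow 2).const_mul (1 / 2 : ℝ)).mul ((hid.pow 2).const_sub 1)).mul
    (hF.pow 2)).sub ((((hv.pow 2).div_const 2).sub
      ((hv.pow (p + 1)).div_const ((p : ℝ) + 1))).const_mul (alphaP p * (1 - alphaP p)))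
  have hc : (5 - (p : ℝ)) / ((p : ℝ) - 1) = 2 * alphaP p - 1 := by
    unfold alphaP; field_simp; ring
  refine HasDerivAt.congr_deriv hH ?_
  have e := heq ρ hρ
  unfold ProfileEq at e
  have hg := auxG_pow p hp h0
  simp only [hv.deriv, hc, id, Pi.pow_apply, Pi.mul_apply, Nat.add_sub_cancel]
  rw [auxG_div p u h0]
  have hpw : alphaP p * (1 - alphaP p) * (auxG p ρ * u ρ) ^ p = ρ ^ 2 * auxG p ρ * u ρ ^ p := by
    rw [mul_pow, ← mul_assoc, hg]
  have hup : u ρ ^ p = -((1 - ρ ^ 2) * deriv (deriv u) ρ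
      + (2 / ρ - (2 + 2 * alphaP p) * ρ) * deriv u ρ - alphaP p * (alphaP p + 1) * u ρ) := by
    linarith
  rw [hup] at hpw
  generalize (auxG p ρ * u ρ) ^ p = V at *
  push_cast
  generalize auxG p ρ = g at *
  generalize deriv (deriv u) ρ = u2 at *
  generalize deriv u ρ = u1 at *
  generalize u ρ = u0 at *
  generalize alphaP p = a at *
  have e1 : ((p : ℝ) + 1) * V * (g * (u1 + a * u0 / ρ)) / ((p : ℝ) + 1)
      = V * (g * (u1 + a * u0 / ρ)) := by field_simp
  rw [e1]
  have e2 : (g * (u1 + a * u0 / ρ)) * (a * (1 - a) * V) = (g * (u1 + a * u0 / ρ)) * (ρ ^ 2 * g *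
    -((1 - ρ ^ 2) * u2 + (2 / ρ - (2 + 2 * a) * ρ) * u1 - a * (a + 1) * u0)) := by rw [hpw]
  rw [← sub_eq_zero] at e2 ⊢
  rw [← e2]
  field_simp
  ring

lemma aux_low (p : ℕ) (hp_odd : Odd p) (hp : 7 ≤ p) (x : ℝ) :
    x ^ 2 / 2 - x ^ (p + 1) / ((p : ℝ) + 1) ≤ 1 / 2 - 1 / ((p : ℝ) + 1) := by
  obtain ⟨k, rfl⟩ := hp_odd
  have hb := one_add_mul_le_pow (a := x ^ 2 - 1) (by nlinarith [sq_nonneg x]) (k + 1)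
  have e : x ^ (2 * k + 1 + 1) = (1 + (x ^ 2 - 1)) ^ (k + 1) := by
    rw [add_sub_cancel, ← pow_mul]; congr 1
  rw [e]
  push_cast at *
  have hk : (0 : ℝ) < 2 * k + 1 + 1 := by positivity
  have : (1 + ((k : ℝ) + 1) * (x ^ 2 - 1)) / (2 * k + 1 + 1)
      ≤ (1 + (x ^ 2 - 1)) ^ (k + 1) / (2 * k + 1 + 1) := by gcongr
  have e3 : (1 + ((k : ℝ) + 1) * (x ^ 2 - 1)) / (2 * k + 1 + 1)
    = 1 / (2 * k + 1 + 1) + (x ^ 2 - 1) / 2 := by field_simp; ring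
  linarith

/-- `H_v' = ((5-p)/(p-1)) ρ v'² ≤ 0` on `(0,1)`, so `H_v` is
nonincreasing, and `H_v ≥ -(p-3)/(p²-1)`. -/
theorem lyapunovHv_monotone (p : ℕ) (hp_odd : Odd p) (hp : 7 ≤ p) (u : ℝ → ℝ)
    (hdiff : ∀ ρ ∈ Ioo (0 : ℝ) 1, DifferentiableAt ℝ u ρ)
    (hdiff2 : ∀ ρ ∈ Ioo (0 : ℝ) 1, DifferentiableAt ℝ (deriv u) ρ)
    (heq : ∀ ρ ∈ Ioo (0 : ℝ) 1, ProfileEq p u ρ) :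
    (∀ ρ ∈ Ioo (0 : ℝ) 1,
      deriv (lyapunovHv p u) ρ =
        ((5 - (p : ℝ)) / ((p : ℝ) - 1)) * ρ * (deriv (fun s => u s / uInfty p s) ρ) ^ 2 ∧
      deriv (lyapunovHv p u) ρ ≤ 0) ∧
    AntitoneOn (lyapunovHv p u) (Ioo 0 1) ∧
    (∀ ρ ∈ Ioo (0 : ℝ) 1, -(((p : ℝ) - 3) / ((p : ℝ) ^ 2 - 1)) ≤ lyapunovHv p u ρ) := by
  have h7 : (7 : ℝ) ≤ p := by exact_mod_cast hp
  have hH := aux_H p hp u hdiff hdiff2 heq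
  have hle : ∀ ρ ∈ Ioo (0 : ℝ) 1, deriv (lyapunovHv p u) ρ ≤ 0 := by
    intro ρ hρ
    rw [(hH ρ hρ).deriv]
    have h1 : (5 - (p : ℝ)) / ((p : ℝ) - 1) ≤ 0 :=
      div_nonpos_of_nonpos_of_nonneg (by linarith) (by linarith)
    exact mul_nonpos_of_nonpos_of_nonneg (mul_nonpos_of_nonpos_of_nonneg h1 hρ.1.le) (sq_nonneg _)
  refine ⟨fun ρ hρ => ⟨(hH ρ hρ).deriv, hle ρ hρ⟩, ?_, ?_⟩
  · apply antitoneOn_of_deriv_nonpos (convex_Ioo 0 1)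
    · exact fun x hx => (hH x hx).continuousAt.continuousWithinAt
    · rw [interior_Ioo]
      exact fun x hx => (hH x hx).differentiableAt.differentiableWithinAt
    · rw [interior_Ioo]
      exact hle
  · intro ρ hρ
    unfold lyapunovHv
    have hl := aux_low p hp_odd hp (u ρ / uInfty p ρ)
    have ha : 0 ≤ alphaP p * (1 - alphaP p) := by
      rw [← aux_alpha p hp]
      exact div_nonneg (by linarith) (sq_nonneg _)
    have hm := mul_le_mul_of_nonneg_left hl ha
    have e : alphaP p * (1 - alphaP p) * (1 / 2 - 1 / ((p : ℝ) + 1))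
        = ((p : ℝ) - 3) / ((p : ℝ) ^ 2 - 1) := by
      rw [← aux_alpha p hp]
      have h1 : (p : ℝ) - 1 ≠ 0 := by linarith
      have h2 : (p : ℝ) + 1 ≠ 0 := by linarith
      have h3 : (p : ℝ) ^ 2 - 1 = (p - 1) * (p + 1) := by ring
      rw [h3]
      field_simp
      ring
    have hs : 0 ≤ (1 / 2) * ρ ^ 2 * (1 - ρ ^ 2)
        * (deriv (fun s => u s / uInfty p s) ρ) ^ 2 := by
      have : 0 ≤ 1 - ρ ^ 2 := by nlinarith [hρ.1, hρ.2]
      positivity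
    linarith
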